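/- Let A and B be finite-dimensional associative unital k-algebras. The k-linear map E_A ⊗[k] E_B → E_{A⊗B} induced by (Δ_A, Δ_B) ↦ τ ∘ (Δ_A ⊗ Δ_B), where τ : (A ⊗ A) ⊗ (B ⊗ B) → (A ⊗ B) ⊗ (A ⊗ B) is the middle-interchange isomorphism, is a linear bijection. In particular Frobdim(A ⊗[k] B) = Frobdim(A) · Frobdim(B). -/

import Mathlib

open TensorProduct

/-- A nearly Frobenius coproduct on a `k`-algebra `A`. -/
def IsNearlyFrobenius (k A : Type*) [Field k] [Ring A] [Algebra k A]
    (Δ : A →ₗ[k] A ⊗[k] A) : Prop :=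
  ∀ a b : A, Δ (a * b) = (a ⊗ₜ[k] (1 : A)) * Δ b ∧ Δ (a * b) = Δ a * ((1 : A) ⊗ₜ[k] b)

/-- The Frobenius space of an algebra. -/
def FrobeniusSpace (k A : Type*) [Field k] [Ring A] [Algebra k A] :
    Submodule k (A →ₗ[k] A ⊗[k] A) where
  carrier := {Δ | IsNearlyFrobenius k A Δ}
  add_mem' := by
    intro Δ₁ Δ₂ h₁ h₂ a b
    refine ⟨?_, ?_⟩
    · simp only [LinearMap.add_apply, (h₁ a b).1, (h₂ a b).1, mul_add]
    · simp only [LinearMap.add_apply, (h₁ a b).2, (h₂ a b).2, add_mul]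
  zero_mem' := by
    intro a b
    simp
  smul_mem' := by
    intro c Δ h a b
    refine ⟨?_, ?_⟩
    · simp only [LinearMap.smul_apply, (h a b).1, Algebra.mul_smul_comm]
    · simp only [LinearMap.smul_apply, (h a b).2, Algebra.smul_mul_assoc]

universe u v

/-- The induced coproduct on a tensor product algebra. -/
noncomputable def tensorCoprod (k A B : Type*) [Field k]
    [Ring A] [Algebra k A] [Ring B] [Algebra k B]
    (ΔA : A →ₗ[k] A ⊗[k] A) (ΔB : B →ₗ[k] B ⊗[k] B) :
    A ⊗[k] B →ₗ[k] (A ⊗[k] B) ⊗[k] (A ⊗[k] B) :=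
  (TensorProduct.tensorTensorTensorComm k A A B B).toLinearMap ∘ₗ
    TensorProduct.map ΔA ΔB

/-!
A nearly Frobenius coproduct is determined by `x = Δ 1`, and the elements of `A ⊗ A` that arise in
this way are those with `(a ⊗ 1) x = x (1 ⊗ a)` for all `a`. For `A ⊗ B` this condition, read in
`(A ⊗ A) ⊗ (B ⊗ B)` through the middle interchange, splits into one linear condition on the factor
`A ⊗ A` and one on `B ⊗ B`. Over a field, tensoring commutes with arbitrary intersections of
kernels (expand in a basis of the other factor), so the solution space is the tensor product of the
two solution spaces.
-/

section Submodule

variable {R M N : Type*} [CommRing R] [AddCommGroup M] [Module R M] [AddCommGroup N] [Module R N]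
  {ι : Sort*}

lemma range_rTensor_subtype_iInf_ker [Module.Free R N] {M' : ι → Type*}
    [∀ i, AddCommGroup (M' i)] [∀ i, Module R (M' i)] (f : ∀ i, M →ₗ[R] M' i) :
    LinearMap.range ((⨅ i, LinearMap.ker (f i)).subtype.rTensor N) =
      ⨅ i, LinearMap.ker ((f i).rTensor N) := by
  apply le_antisymm
  · refine le_iInf fun i => LinearMap.range_le_ker_iff.2 ?_
    rw [← LinearMap.rTensor_comp, LinearMap.le_ker_iff_comp_subtype_eq_zero.1 (iInf_le _ i),
      LinearMap.rTensor_zero]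
  · intro x hx
    let b := Module.Free.chooseBasis R N
    obtain ⟨c, rfl⟩ := TensorProduct.eq_repr_basis_right b x
    have coeff_mem (j) : c j ∈ ⨅ i, LinearMap.ker (f i) := by
      refine (Submodule.mem_iInf _).2 fun i => ?_
      have image_eq_zero : (c.mapRange (f i) (map_zero _)).sum (fun j m => m ⊗ₜ[R] b j) = 0 := by
        rw [Finsupp.sum_mapRange_index fun j => TensorProduct.zero_tmul _ (b j)]
        simpa only [LinearMap.mem_ker, map_finsuppSum, LinearMap.rTensor_tmul] using
          (Submodule.mem_iInf _).1 hx i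
      exact DFunLike.congr_fun (TensorProduct.sum_tmul_basis_right_eq_zero b _ image_eq_zero) j
    exact Submodule.sum_mem _ fun j _ => ⟨⟨c j, coeff_mem j⟩ ⊗ₜ b j, rfl⟩

lemma range_lTensor_subtype_iInf_ker [Module.Free R M] {N' : ι → Type*}
    [∀ i, AddCommGroup (N' i)] [∀ i, Module R (N' i)] (g : ∀ i, N →ₗ[R] N' i) :
    LinearMap.range ((⨅ i, LinearMap.ker (g i)).subtype.lTensor M) =
      ⨅ i, LinearMap.ker ((g i).lTensor M) := by
  have range_lTensor_eq (q : Submodule R N) :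
      LinearMap.range (q.subtype.lTensor M) =
        (LinearMap.range (q.subtype.rTensor M)).comap (TensorProduct.comm R M N).toLinearMap := by
    rw [← LinearMap.comm_comp_rTensor_comp_comm_eq, LinearMap.range_comp,
      LinearMap.range_comp_of_range_eq_top _ (LinearEquiv.range _),
      Submodule.map_equiv_eq_comap_symm, TensorProduct.comm_symm]
  rw [range_lTensor_eq, range_rTensor_subtype_iInf_ker, Submodule.comap_iInf]
  refine iInf_congr fun i => ?_
  rw [← LinearMap.comm_comp_rTensor_comp_comm_eq, LinearEquiv.ker_comp, LinearMap.ker_comp]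

lemma range_mapIncl_eq_inf (p : Submodule R M) (q : Submodule R N) [Module.Flat R (N ⧸ q)] :
    LinearMap.range (TensorProduct.mapIncl p q) =
      LinearMap.range (p.subtype.rTensor N) ⊓ LinearMap.range (q.subtype.lTensor M) := by
  apply le_antisymm
  · rw [TensorProduct.mapIncl]
    refine le_inf ?_ ?_
    · rw [← LinearMap.rTensor_comp_lTensor]
      exact LinearMap.range_comp_le_range _ _
    · rw [← LinearMap.lTensor_comp_rTensor]
      exact LinearMap.range_comp_le_range _ _
  · rintro _ ⟨⟨y, rfl⟩, hy⟩
    rw [← lTensor_mkQ, SetLike.mem_coe, LinearMap.mem_ker, ← LinearMap.comp_apply,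
      LinearMap.lTensor_comp_rTensor, ← LinearMap.rTensor_comp_lTensor, LinearMap.comp_apply] at hy
    have quotient_eq_zero : q.mkQ.lTensor p y = 0 :=
      Module.Flat.rTensor_preserves_injective_linearMap p.subtype p.injective_subtype
        (hy.trans (map_zero _).symm)
    rw [← LinearMap.mem_ker, lTensor_mkQ] at quotient_eq_zero
    obtain ⟨z, rfl⟩ := quotient_eq_zero
    exact ⟨z, by rw [← LinearMap.comp_apply, LinearMap.rTensor_comp_lTensor, TensorProduct.mapIncl]⟩

end Submodule

section Casimir

variable (R : Type*) {A B : Type*} [CommRing R] [Ring A] [Algebra R A] [Ring B] [Algebra R B]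

/-- The commutator `x ↦ a • x - x • a` with `a` for the outer `A`-bimodule structure of `A ⊗ A`,
in which `a` acts on the left of the first factor and on the right of the second. -/
def outerCommutator (a : A) : A ⊗[R] A →ₗ[R] A ⊗[R] A :=
  LinearMap.mulLeft R (a ⊗ₜ 1) - LinearMap.mulRight R (1 ⊗ₜ a)

variable (A) in
/-- The Casimir elements of `A`: those commuting with `A` in the outer bimodule `A ⊗ A`. They are
the values at `1` of nearly Frobenius coproducts. The definition as an intersection of kernels lets
`range_rTensor_subtype_iInf_ker` apply. -/
def casimirSubmodule : Submodule R (A ⊗[R] A) :=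
  ⨅ a, LinearMap.ker (outerCommutator R a)

variable {R}

lemma mem_casimirSubmodule {x : A ⊗[R] A} :
    x ∈ casimirSubmodule R A ↔ ∀ a : A, (a ⊗ₜ 1) * x = x * (1 ⊗ₜ a) := by
  simp only [casimirSubmodule, outerCommutator, Submodule.mem_iInf, LinearMap.mem_ker,
    LinearMap.sub_apply, LinearMap.mulLeft_apply, LinearMap.mulRight_apply, sub_eq_zero]

lemma rTensor_outerCommutator_apply (a : A) (z : (A ⊗[R] A) ⊗[R] (B ⊗[R] B)) :
    (outerCommutator R a).rTensor (B ⊗[R] B) z =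
      ((a ⊗ₜ 1) ⊗ₜ 1) * z - z * ((1 ⊗ₜ a) ⊗ₜ 1) := by
  induction z with
  | zero => simp
  | add x y hx hy => rw [map_add, hx, hy, mul_add, add_mul, add_sub_add_comm]
  | tmul x y => simp [outerCommutator]

lemma lTensor_outerCommutator_apply (b : B) (z : (A ⊗[R] A) ⊗[R] (B ⊗[R] B)) :
    (outerCommutator R b).lTensor (A ⊗[R] A) z =
      (1 ⊗ₜ (b ⊗ₜ 1)) * z - z * (1 ⊗ₜ (1 ⊗ₜ b)) := by
  induction z with
  | zero => simp
  | add x y hx hy => rw [map_add, hx, hy, mul_add, add_mul, add_sub_add_comm]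
  | tmul x y => simp [outerCommutator]

lemma tensorTensorTensorComm_mem_casimirSubmodule {z : (A ⊗[R] A) ⊗[R] (B ⊗[R] B)} :
    TensorProduct.tensorTensorTensorComm R A A B B z ∈ casimirSubmodule R (A ⊗[R] B) ↔
      ∀ (a : A) (b : B), ((a ⊗ₜ 1) ⊗ₜ (b ⊗ₜ 1)) * z = z * ((1 ⊗ₜ a) ⊗ₜ (1 ⊗ₜ b)) := by
  let τ := Algebra.TensorProduct.tensorTensorTensorComm R R R R A A B B
  have pure_iff (a : A) (b : B) :
      ((a ⊗ₜ[R] b) ⊗ₜ[R] 1) * τ z = τ z * (1 ⊗ₜ[R] (a ⊗ₜ[R] b)) ↔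
        ((a ⊗ₜ 1) ⊗ₜ (b ⊗ₜ 1)) * z = z * ((1 ⊗ₜ a) ⊗ₜ (1 ⊗ₜ b)) := by
    rw [← τ.injective.eq_iff, map_mul, map_mul]
    rfl
  rw [mem_casimirSubmodule]
  refine ⟨fun h a b => (pure_iff a b).1 (h _), fun h c => ?_⟩
  induction c with
  | zero => simp
  | add c d hc hd => rw [TensorProduct.add_tmul, TensorProduct.tmul_add, add_mul, mul_add, hc, hd]
  | tmul a b => exact (pure_iff a b).2 (h a b)

lemma comap_tensorTensorTensorComm_casimirSubmodule :
    (casimirSubmodule R (A ⊗[R] B)).comap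
        (TensorProduct.tensorTensorTensorComm R A A B B).toLinearMap =
      (⨅ a : A, LinearMap.ker ((outerCommutator R a).rTensor (B ⊗[R] B))) ⊓
        ⨅ b : B, LinearMap.ker ((outerCommutator R b).lTensor (A ⊗[R] A)) := by
  ext z
  simp only [Submodule.mem_comap, LinearEquiv.coe_coe, tensorTensorTensorComm_mem_casimirSubmodule,
    Submodule.mem_inf, Submodule.mem_iInf, LinearMap.mem_ker, rTensor_outerCommutator_apply,
    lTensor_outerCommutator_apply, sub_eq_zero]
  refine ⟨fun h => ⟨fun a => h a 1, fun b => h 1 b⟩, fun ⟨hA, hB⟩ a b => ?_⟩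
  calc ((a ⊗ₜ 1) ⊗ₜ (b ⊗ₜ 1)) * z
      = ((a ⊗ₜ 1) ⊗ₜ 1) * ((1 ⊗ₜ (b ⊗ₜ 1)) * z) := by simp [← mul_assoc]
    _ = (((a ⊗ₜ 1) ⊗ₜ 1) * z) * (1 ⊗ₜ (1 ⊗ₜ b)) := by rw [hB, mul_assoc]
    _ = z * ((1 ⊗ₜ a) ⊗ₜ (1 ⊗ₜ b)) := by rw [hA]; simp [mul_assoc]

end Casimir

section CasimirTensor

variable (k A B : Type*) [Field k] [Ring A] [Algebra k A] [Ring B] [Algebra k B]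

lemma map_range_mapIncl_casimirSubmodule :
    (LinearMap.range (TensorProduct.mapIncl (casimirSubmodule k A) (casimirSubmodule k B))).map
        (TensorProduct.tensorTensorTensorComm k A A B B).toLinearMap =
      casimirSubmodule k (A ⊗[k] B) := by
  rw [range_mapIncl_eq_inf, casimirSubmodule, casimirSubmodule, range_rTensor_subtype_iInf_ker,
    range_lTensor_subtype_iInf_ker, ← comap_tensorTensorTensorComm_casimirSubmodule,
    Submodule.map_comap_eq_of_surjective (LinearEquiv.surjective _)]

/-- The isomorphism of spaces of Casimir elements given by the middle interchange. -/
noncomputable def casimirTensorEquiv :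
    casimirSubmodule k A ⊗[k] casimirSubmodule k B ≃ₗ[k] casimirSubmodule k (A ⊗[k] B) :=
  LinearEquiv.ofInjective (TensorProduct.mapIncl (casimirSubmodule k A) (casimirSubmodule k B))
      (TensorProduct.map_injective_of_flat_flat _ _ (Submodule.injective_subtype _)
        (Submodule.injective_subtype _)) ≪≫ₗ
    (TensorProduct.tensorTensorTensorComm k A A B B).submoduleMap _ ≪≫ₗ
    LinearEquiv.ofEq _ _ (map_range_mapIncl_casimirSubmodule k A B)

end CasimirTensor

namespace FrobeniusSpace

variable {k A B : Type*} [Field k] [Ring A] [Algebra k A] [Ring B] [Algebra k B]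

lemma apply_eq_mul_apply_one (Δ : FrobeniusSpace k A) (a : A) :
    Δ.val a = (a ⊗ₜ 1) * Δ.val 1 := by
  simpa only [mul_one] using (Δ.property a 1).1

lemma apply_eq_apply_one_mul (Δ : FrobeniusSpace k A) (a : A) :
    Δ.val a = Δ.val 1 * (1 ⊗ₜ a) := by
  simpa only [one_mul] using (Δ.property 1 a).2

lemma apply_one_mem_casimirSubmodule (Δ : FrobeniusSpace k A) :
    Δ.val 1 ∈ casimirSubmodule k A :=
  mem_casimirSubmodule.2 fun a =>
    (apply_eq_mul_apply_one Δ a).symm.trans (apply_eq_apply_one_mul Δ a)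

/-- The coproduct `a ↦ (a ⊗ 1) x` attached to a Casimir element `x`. -/
def ofCasimir (x : casimirSubmodule k A) : FrobeniusSpace k A where
  val := LinearMap.mulRight k x.val ∘ₗ
    (Algebra.TensorProduct.includeLeft : A →ₐ[k] A ⊗[k] A).toLinearMap
  property a b := by
    have mul_left : ((a * b) ⊗ₜ[k] (1 : A)) * x.val = (a ⊗ₜ 1) * ((b ⊗ₜ 1) * x.val) := by
      rw [← mul_assoc, Algebra.TensorProduct.tmul_mul_tmul, one_mul]
    refine ⟨mul_left, mul_left.trans ?_⟩
    rw [mem_casimirSubmodule.1 x.property b, ← mul_assoc]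
    rfl

variable (k A) in
/-- Evaluation at `1`, identifying nearly Frobenius coproducts with Casimir elements. -/
noncomputable def evalOneEquiv : FrobeniusSpace k A ≃ₗ[k] casimirSubmodule k A where
  toFun Δ := ⟨Δ.val 1, apply_one_mem_casimirSubmodule Δ⟩
  map_add' _ _ := rfl
  map_smul' _ _ := rfl
  invFun := ofCasimir
  left_inv Δ := by
    ext a
    exact (apply_eq_mul_apply_one Δ a).symm
  right_inv x := Subtype.ext (one_mul x.val)

variable (k A B) in
/-- The isomorphism `E_A ⊗ E_B ≃ E_{A ⊗ B}`, obtained from `casimirTensorEquiv` by evaluating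
coproducts at `1`. -/
noncomputable def tensorEquiv :
    FrobeniusSpace k A ⊗[k] FrobeniusSpace k B ≃ₗ[k] FrobeniusSpace k (A ⊗[k] B) :=
  TensorProduct.congr (evalOneEquiv k A) (evalOneEquiv k B) ≪≫ₗ casimirTensorEquiv k A B ≪≫ₗ
    (evalOneEquiv k (A ⊗[k] B)).symm

lemma coe_tensorEquiv_tmul (ΔA : FrobeniusSpace k A) (ΔB : FrobeniusSpace k B) :
    (tensorEquiv k A B (ΔA ⊗ₜ ΔB)).val = tensorCoprod k A B ΔA.val ΔB.val := by
  let τ := Algebra.TensorProduct.tensorTensorTensorComm k k k k A A B B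
  ext a b
  -- The first step unfolds `tensorEquiv (ΔA ⊗ ΔB)` to `ofCasimir (τ (ΔA 1 ⊗ ΔB 1))`.
  calc (tensorEquiv k A B (ΔA ⊗ₜ ΔB)).val (a ⊗ₜ b)
      = τ ((a ⊗ₜ 1) ⊗ₜ (b ⊗ₜ 1)) * τ (ΔA.val 1 ⊗ₜ ΔB.val 1) := rfl
    _ = τ (ΔA.val a ⊗ₜ ΔB.val b) := by
      rw [← map_mul, Algebra.TensorProduct.tmul_mul_tmul, ← apply_eq_mul_apply_one,
        ← apply_eq_mul_apply_one]

end FrobeniusSpace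

universe w

theorem frobeniusSpace_tensor_general (k : Type u) (A : Type v) (B : Type w) [Field k]
    [Ring A] [Algebra k A] [Ring B] [Algebra k B] :
    ∃ e : (FrobeniusSpace k A ⊗[k] FrobeniusSpace k B) ≃ₗ[k] FrobeniusSpace k (A ⊗[k] B),
      (∀ (ΔA : FrobeniusSpace k A) (ΔB : FrobeniusSpace k B),
        (e (ΔA ⊗ₜ[k] ΔB)).val = tensorCoprod k A B ΔA.val ΔB.val) ∧
      Module.rank k (FrobeniusSpace k (A ⊗[k] B)) =
        Cardinal.lift.{w} (Module.rank k (FrobeniusSpace k A)) *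
          Cardinal.lift.{v} (Module.rank k (FrobeniusSpace k B)) := by
  have : Module.Free k (FrobeniusSpace k A) := .of_divisionRing k (FrobeniusSpace k A)
  have : Module.Free k (FrobeniusSpace k B) := .of_divisionRing k (FrobeniusSpace k B)
  let e := FrobeniusSpace.tensorEquiv k A B
  exact ⟨e, FrobeniusSpace.coe_tensorEquiv_tmul, by rw [← e.rank_eq, rank_tensorProduct]⟩

set_option maxHeartbeats 1000000 in
/-- for finite dimensional algebras `A`, `B`, the assignment
`(Δ_A, Δ_B) ↦ τ ∘ (Δ_A ⊗ Δ_B)` induces a `k`-linear bijection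
`E_A ⊗ E_B ≃ E_{A ⊗ B}`; in particular
`Frobdim (A ⊗ B) = Frobdim A * Frobdim B`. -/
theorem frobeniusSpace_tensor (k : Type u) (A B : Type v) [Field k]
    [Ring A] [Algebra k A] [Ring B] [Algebra k B]
    [FiniteDimensional k A] [FiniteDimensional k B] :
    ∃ e : (FrobeniusSpace k A ⊗[k] FrobeniusSpace k B) ≃ₗ[k] FrobeniusSpace k (A ⊗[k] B),
      (∀ (ΔA : FrobeniusSpace k A) (ΔB : FrobeniusSpace k B),
        (e (ΔA ⊗ₜ[k] ΔB)).val =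
          tensorCoprod k A B ΔA.val ΔB.val) ∧
      Module.finrank k (FrobeniusSpace k (A ⊗[k] B)) =
        Module.finrank k (FrobeniusSpace k A) * Module.finrank k (FrobeniusSpace k B) := by
  obtain ⟨e, he, rank_eq⟩ := frobeniusSpace_tensor_general k A B
  exact ⟨e, he, by simp [Module.finrank, rank_eq]⟩
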